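/- Let Ω ⊂ ℝ^d be a bounded open domain and let σ(x) = max(0,x) be the ReLU activation. There exists a constant C > 0 depending only on d such that for every vector of positive integer widths W = (w_1,…,w_L), there is a smooth compactly supported function f: ℝ^d → ℝ with ∫_{ℝ^d} |f(x)| dx + ∫_{ℝ^d} ‖D^d f(x)‖ dx ≤ 1 (where D^d f denotes the d-th total derivative, i.e. the iterated Fréchet derivative of order d, and ‖·‖ its operator norm) such that for every g ∈ Υ^W(ℝ^d), sup_{x ∈ Ω} |f(x) − g(x)| ≥ C · P(W)^{-1}. -/

import Mathlib

/-!
Restricted to a line `t ↦ x₀ + t • e`, a ReLU network with parameters `η ∈ ℝ^P` takes at each `t`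
one of finitely many values `A η + B η * t`, where the list of pairs `(A, B)` of polynomials in the
parameters depends only on the architecture and the line (`IsPolyPiecewise`, `exists_family`). If
the network rises from below `a` to above `b` near each of `N` points, pick a level `c ∈ (a, b)` which is not
the value of a constant piece; then the network takes the value `c` at points `t₁, …, t_N` near the
given ones, and each is a rational function `tᵢ = (c - Aᵢ η) / Bᵢ η` of the `P + 1` quantities
`η, c`. For `N = P + 2` such rational functions are algebraically dependent, because the field of
rational functions in `P + 1` variables has transcendence degree `P + 1`. As there are finitely many
choices of pieces, a single nonzero polynomial `Q`, depending only on the architecture and the line,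
vanishes at every tuple `(t₁, …, t_N)` arising in this way (`exists_crossing_obstruction`).

It remains to choose `s` with `Q` nonvanishing on a whole cube around `s`
(`exists_zero_free_cube`), and to put at each `x₀ + sᵢ • e` a bump of height `H ~ 1 / N` that is so
narrow that the sum of the bumps vanishes at some point of the line within the cube's radius of
each `sᵢ`. An approximation with error below `H / 3` would have to rise from below `H / 3` to above
`2 * H / 3` near each `sᵢ`, which `Q` forbids. The bumps can be made arbitrarily narrow at no cost,
because `∫ ‖D^d φ‖` is invariant under dilation in dimension `d` (`exists_bumps`).
-/

noncomputable def sgn (x : ℝ) : ℝ := if 0 ≤ x then 1 else -1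

/-- The hidden part of a feedforward network with widths `W`:
`σ ∘ A_{L-1} ∘ σ ∘ ⋯ ∘ σ ∘ A_0`, where `σ` acts coordinatewise. -/
inductive IsHidden (σ : ℝ → ℝ) : (n : ℕ) → List ℕ → (m : ℕ) → ((Fin n → ℝ) → (Fin m → ℝ)) → Prop
  | nil (n : ℕ) : IsHidden σ n [] n id
  | cons {n m k : ℕ} {W : List ℕ} (M : Matrix (Fin m) (Fin n) ℝ) (b : Fin m → ℝ)
      {g : (Fin m → ℝ) → (Fin k → ℝ)} :
      IsHidden σ m W k g →
      IsHidden σ n (m :: W) k (fun x => g (fun j => σ (M.mulVec x j + b j)))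

/-- The class `Υ^W(ℝ^d)` of networks `A_L ∘ σ ∘ A_{L-1} ∘ σ ∘ ⋯ ∘ σ ∘ A_0`. -/
def NNclass (σ : ℝ → ℝ) (d : ℕ) (W : List ℕ) : Set ((Fin d → ℝ) → ℝ) :=
  {f | ∃ (m : ℕ) (g : (Fin d → ℝ) → (Fin m → ℝ)) (M : Matrix (Fin 1) (Fin m) ℝ) (b : ℝ),
        IsHidden σ d W m g ∧ ∀ x, f x = M.mulVec (g x) 0 + b}

/-- `Σ_{i=1}^{L-1} w_{i+1} w_i` for the list of widths. -/
def consecSum : List ℕ → ℕ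
  | w1 :: w2 :: rest => w2 * w1 + consecSum (w2 :: rest)
  | _ => 0

/-- The number of parameters `P(W) = w_L + d w_1 + 1 + Σ_{i=1}^{L-1} w_{i+1} w_i + Σ_{i=1}^L w_i`. -/
def numParams (d : ℕ) (W : List ℕ) : ℕ :=
  W.getLastD 0 + d * W.headI + 1 + consecSum W + W.sum

/-- `σ` is piecewise polynomial with `p` pieces, each of degree at most `D`:
there are breakpoints `c_1 < ⋯ < c_{p-1}` and polynomials `q_1, …, q_p` of degree `≤ D`
with `σ = q_i` on `[c_{i-1}, c_i)` (where `c_0 = -∞`, `c_p = ∞`). -/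
def IsPiecewisePoly (σ : ℝ → ℝ) (p D : ℕ) : Prop :=
  0 < p ∧ ∃ (c : Fin (p - 1) → ℝ) (q : Fin p → Polynomial ℝ),
    StrictMono c ∧ (∀ i, (q i).natDegree ≤ D) ∧
    ∀ (x : ℝ) (i : Fin p),
      (∀ j : Fin (p - 1), (j : ℕ) < (i : ℕ) → c j ≤ x) →
      (∀ j : Fin (p - 1), (i : ℕ) ≤ (j : ℕ) → x < c j) →
      σ x = (q i).eval x

/-- `g` is piecewise polynomial with at most `P` pieces, each of degree at most `D`. -/
def PiecewisePolyAtMost (g : ℝ → ℝ) (P D : ℕ) : Prop :=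
  ∃ p ≤ P, IsPiecewisePoly g p D

/-- The class `Υ^W(ℝ)` of networks on a one-dimensional input. -/
def NNclass1 (σ : ℝ → ℝ) (W : List ℕ) : Set (ℝ → ℝ) :=
  {f | ∃ F ∈ NNclass σ 1 W, ∀ t : ℝ, f t = F (fun _ => t)}

/-- `f` has at most `M` sign changes. -/
def AtMostSignChanges (f : ℝ → ℝ) (M : ℕ) : Prop :=
  ¬ ∃ x : Fin (M + 2) → ℝ, StrictMono x ∧
      ∀ i : Fin (M + 1), sgn (f (x i.castSucc)) ≠ sgn (f (x i.succ))

open MvPolynomial Topology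

/-! ### Families of piecewise affine functions with polynomial coefficients -/

/-- A family `F η` of real functions, with parameters `η : κ → ℝ`, such that for all `η` and `t` the
value `F η t` is one of finitely many `A η + B η * t`, with polynomials `A`, `B` in the parameters
which do not depend on `η` and `t`. Nothing is recorded about the regions where a given
piece is active. -/
def IsPolyPiecewise (κ : Type) (F : (κ → ℝ) → ℝ → ℝ) : Prop :=
  ∃ S : Finset (MvPolynomial κ ℝ × MvPolynomial κ ℝ),
    ∀ η t, ∃ p ∈ S, F η t = eval η p.1 + eval η p.2 * t

namespace IsPolyPiecewise
variable {κ μ : Type} {F G : (κ → ℝ) → ℝ → ℝ}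

lemma affine (p q : MvPolynomial κ ℝ) :
    IsPolyPiecewise κ fun η t => eval η p + eval η q * t :=
  ⟨{(p, q)}, fun η t => ⟨(p, q), by simp, rfl⟩⟩

lemma const (p : MvPolynomial κ ℝ) : IsPolyPiecewise κ fun η _ => eval η p := by
  simpa using affine p 0

lemma add (hF : IsPolyPiecewise κ F) (hG : IsPolyPiecewise κ G) :
    IsPolyPiecewise κ fun η t => F η t + G η t := by
  classical
  obtain ⟨S, hS⟩ := hF
  obtain ⟨T, hT⟩ := hG
  refine ⟨(S ×ˢ T).image fun x => x.1 + x.2, fun η t => ?_⟩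
  obtain ⟨p, hp, h⟩ := hS η t
  obtain ⟨q, hq, h'⟩ := hT η t
  refine ⟨p + q, Finset.mem_image.2 ⟨(p, q), by simp [hp, hq], rfl⟩, ?_⟩
  simp only [h, h', Prod.fst_add, Prod.snd_add, map_add]
  ring

lemma poly_mul (r : MvPolynomial κ ℝ) (hF : IsPolyPiecewise κ F) :
    IsPolyPiecewise κ fun η t => eval η r * F η t := by
  classical
  obtain ⟨S, hS⟩ := hF
  refine ⟨S.image fun x => (r * x.1, r * x.2), fun η t => ?_⟩
  obtain ⟨p, hp, h⟩ := hS η t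
  refine ⟨(r * p.1, r * p.2), Finset.mem_image.2 ⟨p, hp, rfl⟩, ?_⟩
  simp only [h, map_mul]
  ring

lemma sum {ι : Type} (s : Finset ι) {F : ι → (κ → ℝ) → ℝ → ℝ}
    (hF : ∀ i, IsPolyPiecewise κ (F i)) :
    IsPolyPiecewise κ fun η t => ∑ i ∈ s, F i η t := by
  classical
  induction s using Finset.induction_on with
  | empty => simpa using const (κ := κ) 0
  | insert a s ha ih => simpa [Finset.sum_insert ha] using (hF a).add ih

lemma relu (hF : IsPolyPiecewise κ F) : IsPolyPiecewise κ fun η t => max 0 (F η t) := by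
  classical
  obtain ⟨S, hS⟩ := hF
  refine ⟨insert 0 S, fun η t => ?_⟩
  rcases le_total (F η t) 0 with h | h
  · exact ⟨0, by simp, by simp [h]⟩
  · obtain ⟨p, hp, h'⟩ := hS η t
    exact ⟨p, by simp [hp], (max_eq_right h).trans h'⟩

lemma rename (e : κ → μ) (hF : IsPolyPiecewise κ F) :
    IsPolyPiecewise μ fun η t => F (η ∘ e) t := by
  classical
  obtain ⟨S, hS⟩ := hF
  refine ⟨S.image fun x => (MvPolynomial.rename e x.1, MvPolynomial.rename e x.2),
    fun η t => ?_⟩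
  obtain ⟨p, hp, h⟩ := hS (η ∘ e) t
  refine ⟨_, Finset.mem_image.2 ⟨p, hp, rfl⟩, ?_⟩
  simp only [h, eval_rename]

/-- An affine combination of members of families indexed by `κ`, whose coefficients are further
parameters. -/
lemma neuron {n : ℕ} {X : Fin n → (κ → ℝ) → ℝ → ℝ} (hX : ∀ i, IsPolyPiecewise κ (X i))
    (e : κ → μ) (v : Fin n → μ) (b : μ) :
    IsPolyPiecewise μ fun η t => ∑ i, η (v i) * X i (η ∘ e) t + η b := by
  have h1 : ∀ i, IsPolyPiecewise μ fun η t => η (v i) * X i (η ∘ e) t := fun i => by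
    simpa using ((hX i).rename e).poly_mul (MvPolynomial.X (v i))
  simpa using (sum Finset.univ h1).add (const (MvPolynomial.X b))

end IsPolyPiecewise

/-! ### Algebraic dependence of the roots -/

/-- The roots `tᵢ = -Aᵢ / Bᵢ` of `N` affine functions whose coefficients are polynomials in fewer
than `N` variables satisfy a nontrivial polynomial relation. -/
lemma exists_relation_aux {κ : Type} [Fintype κ] {N : ℕ} (hN : Fintype.card κ < N)
    (A B : Fin N → MvPolynomial κ ℝ) :
    ∃ Q : MvPolynomial (Fin N) ℝ, Q ≠ 0 ∧ ∀ (η : κ → ℝ) (t : Fin N → ℝ),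
      (∀ i, eval η (B i) ≠ 0 ∧ eval η (A i) + eval η (B i) * t i = 0) → eval t Q = 0 := by
  by_cases hB : ∃ i, B i = 0
  · obtain ⟨i, hi⟩ := hB
    exact ⟨1, one_ne_zero, fun η t h => absurd (by simp [hi]) (h i).1⟩
  push Not at hB
  let R := MvPolynomial κ ℝ
  let K := FractionRing R
  let r : Fin N → K := fun i => -algebraMap R K (A i) / algebraMap R K (B i)
  have htr : Algebra.trdeg ℝ K = Fintype.card κ := by
    have h1 := trdeg_add_eq ℝ R (A := K)
    have : Algebra.IsAlgebraic R K := IsLocalization.isAlgebraic K (nonZeroDivisors R)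
    have h2 : Algebra.trdeg R K = 0 := trdeg_eq_zero
    rw [← h1, h2, MvPolynomial.trdeg_of_isDomain]
    simp
  have hdep : ¬ AlgebraicIndependent ℝ r := by
    intro h
    have := h.cardinalMk_le_trdeg
    rw [htr] at this
    simp at this
    omega
  rw [algebraicIndependent_iff] at hdep
  push Not at hdep
  obtain ⟨Q, hQ0, hQ⟩ := hdep
  refine ⟨Q, hQ, fun η t ht => ?_⟩
  -- Specialisation of the relation at `η`: polynomials in `r` have denominators not vanishing at
  -- `η`, and these can be cleared both in `K` and after evaluation.
  have key : ∀ P : MvPolynomial (Fin N) ℝ, ∃ E G : R, eval η E ≠ 0 ∧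
      algebraMap R K E * aeval r P = algebraMap R K G ∧ eval η E * eval t P = eval η G := by
    intro P
    induction P using MvPolynomial.induction_on with
    | C a =>
      refine ⟨1, C a, by simp, ?_, by simp⟩
      simp only [map_one, one_mul, aeval_C]
      rw [IsScalarTower.algebraMap_apply ℝ R K]
      rfl
    | add p q hp hq =>
      obtain ⟨E, G, h1, h2, h3⟩ := hp
      obtain ⟨E', G', h1', h2', h3'⟩ := hq
      refine ⟨E * E', G * E' + E * G', by simp [h1, h1'], ?_, ?_⟩
      · simp only [map_mul, map_add, ← h2, ← h2']; ring
      · simp only [map_mul, map_add, ← h3, ← h3']; ring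
    | mul_X p i hp =>
      obtain ⟨E, G, h1, h2, h3⟩ := hp
      refine ⟨E * B i, G * -A i, by simp [h1, (ht i).1], ?_, ?_⟩
      · have hb : algebraMap R K (B i) ≠ 0 := by
          simpa using hB i
        simp only [map_mul, map_neg, ← h2, aeval_X, r]
        rw [← mul_div_cancel_right₀ (algebraMap R K E * aeval r p * -algebraMap R K (A i)) hb]
        ring
      · simp only [map_mul, map_neg, ← h3, eval_X]
        linear_combination (eval η E * eval t p) * (ht i).2
  obtain ⟨E, G, h1, h2, h3⟩ := key Q
  rw [hQ0, mul_zero] at h2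
  have hG : G = 0 := by
    have := h2.symm
    simpa using this
  rw [hG, map_zero] at h3
  exact (mul_eq_zero.mp h3).resolve_left h1

/-- A single relation serving all choices of `N` affine functions from a finite set. -/
lemma exists_relation {κ : Type} [Fintype κ] {N : ℕ} (hN : Fintype.card κ < N)
    (S : Finset (MvPolynomial κ ℝ × MvPolynomial κ ℝ)) :
    ∃ Q : MvPolynomial (Fin N) ℝ, Q ≠ 0 ∧ ∀ (η : κ → ℝ) (t : Fin N → ℝ),
      (∀ i, ∃ p ∈ S, eval η p.2 ≠ 0 ∧ eval η p.1 + eval η p.2 * t i = 0) → eval t Q = 0 := by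
  choose Q hQ0 hQ using fun a : Fin N → S =>
    exists_relation_aux hN (fun i => (a i).1.1) (fun i => (a i).1.2)
  refine ⟨∏ a, Q a, Finset.prod_ne_zero_iff.mpr fun a _ => hQ0 a, fun η t h => ?_⟩
  choose p hp h1 h2 using h
  rw [map_prod]
  exact Finset.prod_eq_zero (Finset.mem_univ (fun i => ⟨p i, hp i⟩))
    (hQ _ η t fun i => ⟨h1 i, h2 i⟩)

/-! ### Networks along a line -/

lemma continuous_of_isHidden {σ : ℝ → ℝ} (hσ : Continuous σ) {n k : ℕ} {W : List ℕ}
    {g : (Fin n → ℝ) → (Fin k → ℝ)} (h : IsHidden σ n W k g) : Continuous g := by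
  induction h with
  | nil n => exact continuous_id
  | cons M b _ ih =>
    refine ih.comp (continuous_pi fun j => hσ.comp ?_)
    have : Continuous fun x => M.mulVec x := Continuous.matrix_mulVec continuous_const continuous_id
    exact ((continuous_apply j).comp this).add continuous_const

lemma continuous_of_mem_NNclass {σ : ℝ → ℝ} (hσ : Continuous σ) {d : ℕ} {W : List ℕ}
    {g : (Fin d → ℝ) → ℝ} (h : g ∈ NNclass σ d W) : Continuous g := by
  obtain ⟨m, G, M, b, hG, hg⟩ := h
  rw [show g = fun x => M.mulVec (G x) 0 + b from funext hg]
  have : Continuous fun x => M.mulVec (G x) :=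
    Continuous.matrix_mulVec continuous_const (continuous_of_isHidden hσ hG)
  exact ((continuous_apply 0).comp this).add continuous_const

/-- The number of parameters of a network with `n` inputs and hidden widths `W`, computed layer by
layer; `W = []` stands for an affine map `ℝⁿ → ℝ`. -/
def paramCount (n : ℕ) : List ℕ → ℕ
  | [] => n + 1
  | m :: W => m * n + m + paramCount m W

lemma paramCount_eq (d m : ℕ) (W : List ℕ) :
    paramCount d (m :: W) = numParams d (m :: W) := by
  induction W generalizing d m with
  | nil => simp [paramCount, numParams, consecSum]; ring
  | cons k W ih =>
    have h := ih m k
    rw [paramCount, h]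
    simp [numParams, consecSum]
    ring

/-- All networks of a given architecture, fed with inputs from `IsPolyPiecewise` families with
parameters `ι`, belong to one `IsPolyPiecewise` family, whose parameters are those of the input and
the weights and biases. -/
lemma exists_family (W : List ℕ) : ∀ (n : ℕ) (ι : Type) [Fintype ι]
    (X : Fin n → (ι → ℝ) → ℝ → ℝ), (∀ i, IsPolyPiecewise ι (X i)) →
    ∃ (κ : Type) (_ : Fintype κ) (F : (κ → ℝ) → ℝ → ℝ), IsPolyPiecewise κ F ∧
      Fintype.card κ = Fintype.card ι + paramCount n W ∧
      ∀ (k : ℕ) (g : (Fin n → ℝ) → (Fin k → ℝ)), IsHidden (fun t => max 0 t) n W k g →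
        ∀ (M : Matrix (Fin 1) (Fin k) ℝ) (b : ℝ) (θ : ι → ℝ),
          ∃ η : κ → ℝ, ∀ t, F η t = M.mulVec (g fun i => X i θ t) 0 + b := by
  induction W with
  | nil =>
    intro n ι _ X hX
    refine ⟨ι ⊕ (Fin n ⊕ Unit), inferInstance, _,
      IsPolyPiecewise.neuron hX Sum.inl (fun i => Sum.inr (Sum.inl i)) (Sum.inr (Sum.inr ())),
      by simp [paramCount], ?_⟩
    intro k g hg M b θ
    cases hg
    refine ⟨Sum.elim θ (Sum.elim (fun i => M 0 i) fun _ => b), fun t => ?_⟩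
    simp [Matrix.mulVec, dotProduct]
  | cons m W ih =>
    intro n ι _ X hX
    obtain ⟨κ, hκ, F, hF, hcard, hrep⟩ := ih m (ι ⊕ ((Fin m × Fin n) ⊕ Fin m))
      (fun j η t => max 0 (∑ i, η (Sum.inr (Sum.inl (j, i))) * X i (η ∘ Sum.inl) t +
        η (Sum.inr (Sum.inr j))))
      (fun j => (IsPolyPiecewise.neuron hX Sum.inl (fun i => Sum.inr (Sum.inl (j, i)))
        (Sum.inr (Sum.inr j))).relu)
    refine ⟨κ, hκ, F, hF, ?_, ?_⟩
    · rw [hcard]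
      simp [paramCount]
      ring
    · intro k g hg M b θ
      cases hg with
      | cons M' b' hg' =>
        obtain ⟨η, hη⟩ := hrep k _ hg' M b
          (Sum.elim θ (Sum.elim (fun q => M' q.1 q.2) b'))
        refine ⟨η, fun t => ?_⟩
        rw [hη]
        simp [Matrix.mulVec, dotProduct]

/-- There is a nonzero polynomial, depending only on the architecture and on the line
`t ↦ x₀ + t • e`, with a zero in every box spanned by `u` and `v` such that some network of this
architecture rises from below `a` to above `b` between `u i` and `v i` for all `i`. -/
lemma exists_crossing_obstruction (d : ℕ) (W : List ℕ) (hW : W ≠ []) {N : ℕ}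
    (hN : N = numParams d W + 2) (x₀ e : Fin d → ℝ) :
    ∃ Q : MvPolynomial (Fin N) ℝ, Q ≠ 0 ∧
      ∀ g ∈ NNclass (fun t => max 0 t) d W, ∀ (a b : ℝ), a < b →
      ∀ u v : Fin N → ℝ,
        (∀ i, g (x₀ + u i • e) < a) → (∀ i, b < g (x₀ + v i • e)) →
        ∃ t : Fin N → ℝ, (∀ i, t i ∈ Set.uIcc (u i) (v i)) ∧ eval t Q = 0 := by
  classical
  obtain ⟨m, W, rfl⟩ := List.exists_cons_of_ne_nil hW
  obtain ⟨κ, _, F, hF, hcard, hrep⟩ := exists_family (m :: W) d Empty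
    (fun i _ t => x₀ i + t * e i)
    (fun i => by simpa [mul_comm] using IsPolyPiecewise.affine (κ := Empty) (C (x₀ i)) (C (e i)))
  rw [paramCount_eq, Fintype.card_empty, zero_add] at hcard
  obtain ⟨S, hS⟩ := hF
  -- The extra variable `none` is the level at which the crossings are taken.
  let T : Finset (MvPolynomial (Option κ) ℝ × MvPolynomial (Option κ) ℝ) :=
    S.image fun p => (rename some p.1 - MvPolynomial.X none, rename some p.2)
  obtain ⟨Q, hQ0, hQ⟩ := exists_relation (N := N)
    (by rw [Fintype.card_option, hcard]; omega) T
  refine ⟨Q, hQ0, fun g hg a b hab u v hu hv => ?_⟩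
  have hgc := continuous_of_mem_NNclass (continuous_const.max continuous_id) hg
  obtain ⟨k, G, M, β, hG, hgG⟩ := hg
  obtain ⟨η, hη⟩ := hrep k G hG M β Empty.elim
  have hF' : ∀ t, g (x₀ + t • e) = F η t := fun t => by
    rw [hη, hgG]
    rfl
  -- A level avoiding the values of all constant pieces.
  obtain ⟨c, hc, hcS⟩ := (Set.Ioo_infinite hab).exists_notMem_finset
    (S.image fun p => eval η p.1)
  have hline : Continuous fun t : ℝ => g (x₀ + t • e) := by fun_prop
  have hivt : ∀ i, ∃ t ∈ Set.uIcc (u i) (v i), g (x₀ + t • e) = c := fun i =>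
    intermediate_value_uIcc hline.continuousOn
      (Set.Icc_subset_uIcc ⟨((hu i).trans hc.1).le, (hc.2.trans (hv i)).le⟩)
  choose t ht htc using hivt
  refine ⟨t, ht, hQ (fun o => o.elim c η) t fun i => ?_⟩
  obtain ⟨p, hp, hpt⟩ := hS η (t i)
  rw [← hF', htc] at hpt
  have hη' : (fun o : Option κ => o.elim c η) ∘ some = η := rfl
  refine ⟨_, Finset.mem_image_of_mem _ hp, ?_, ?_⟩
  · rw [eval_rename, hη']
    intro h0
    rw [h0, zero_mul, add_zero] at hpt
    exact hcS (Finset.mem_image.2 ⟨p, hp, hpt.symm⟩)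
  · simp only [map_sub, eval_rename, hη', eval_X, Option.elim_none]
    linarith

/-! ### Bumps and their Sobolev norm -/

open MeasureTheory in
/-- Bumps of height `1` supported in arbitrarily small balls with bounded `∫ |φ| + ∫ ‖D^d φ‖`: the
factor `r ^ d` from the dilation of the volume cancels the factor `r⁻¹ ^ d` from the derivative. -/
lemma exists_bumps (d : ℕ) : ∃ K : ℝ, 0 < K ∧
    ∀ (y : EuclideanSpace ℝ (Fin d)) (r : ℝ), 0 < r → r ≤ 1 →
    ∃ φ : EuclideanSpace ℝ (Fin d) → ℝ, ContDiff ℝ (⊤ : ℕ∞) φ ∧ HasCompactSupport φ ∧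
      (∀ x, 0 ≤ φ x) ∧ φ y = 1 ∧ (∀ x, r ≤ dist x y → φ x = 0) ∧
      (∫ x, |φ x|) + (∫ x, ‖iteratedFDeriv ℝ d φ x‖) ≤ K := by
  let ψ : ContDiffBump (0 : EuclideanSpace ℝ (Fin d)) := ⟨1 / 2, 1, by norm_num, by norm_num⟩
  have hψ : ContDiff ℝ (⊤ : ℕ∞) ψ := ψ.contDiff
  have hI1 : 0 ≤ ∫ x, |ψ x| := integral_nonneg fun x => abs_nonneg _
  have hI2 : 0 ≤ ∫ x, ‖iteratedFDeriv ℝ d ψ x‖ := integral_nonneg fun x => norm_nonneg _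
  refine ⟨(∫ x, |ψ x|) + (∫ x, ‖iteratedFDeriv ℝ d ψ x‖) + 1, by positivity, ?_⟩
  intro y r hr hr1
  have hsupp : ∀ x, r ≤ dist x y → ψ (r⁻¹ • (x - y)) = 0 := by
    intro x hx
    apply ψ.zero_of_le_dist
    rw [dist_zero_right, norm_smul, ← dist_eq_norm, Real.norm_of_nonneg (by positivity),
      inv_mul_eq_div, one_le_div hr]
    exact hx
  have hsm : ContDiff ℝ (⊤ : ℕ∞) fun x => ψ (r⁻¹ • x) := hψ.comp (contDiff_const_smul _)
  refine ⟨fun x => ψ (r⁻¹ • (x - y)), ?_, ?_, fun x => ψ.nonneg, ?_, hsupp, ?_⟩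
  · exact hsm.comp (contDiff_id.sub contDiff_const)
  · refine HasCompactSupport.intro (isCompact_closedBall y r) fun x hx => hsupp x ?_
    rw [Metric.mem_closedBall, not_le] at hx
    exact hx.le
  · simpa using ψ.one_of_mem_closedBall (by simp [ψ])
  have hfin : Module.finrank ℝ (EuclideanSpace ℝ (Fin d)) = d := by simp
  have e1 : ∫ x, |ψ (r⁻¹ • (x - y))| = r ^ d * ∫ x, |ψ x| := by
    rw [integral_sub_right_eq_self (fun x => |ψ (r⁻¹ • x)|) y,
      Measure.integral_comp_inv_smul_of_nonneg volume (fun x => |ψ x|) hr.le, hfin, smul_eq_mul]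
  have e2 : ∫ x, ‖iteratedFDeriv ℝ d (fun x => ψ (r⁻¹ • (x - y))) x‖
      = ∫ x, ‖iteratedFDeriv ℝ d ψ x‖ := by
    have h : ∀ x, ‖iteratedFDeriv ℝ d (fun x => ψ (r⁻¹ • (x - y))) x‖ =
        (r⁻¹) ^ d * ‖iteratedFDeriv ℝ d ψ (r⁻¹ • (x - y))‖ := fun x => by
      rw [iteratedFDeriv_comp_sub (f := fun x => ψ (r⁻¹ • x)),
        iteratedFDeriv_comp_const_smul r⁻¹ (hψ.of_le (by exact_mod_cast le_top)), norm_smul,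
        Real.norm_of_nonneg (by positivity)]
    simp_rw [h]
    rw [integral_const_mul,
      integral_sub_right_eq_self (fun x => ‖iteratedFDeriv ℝ d ψ (r⁻¹ • x)‖) y,
      Measure.integral_comp_inv_smul_of_nonneg volume (fun x => ‖iteratedFDeriv ℝ d ψ x‖) hr.le,
      hfin, smul_eq_mul, ← mul_assoc, ← mul_pow, inv_mul_cancel₀ hr.ne', one_pow, one_mul]
  rw [e1, e2]
  have : r ^ d * ∫ x, |ψ x| ≤ 1 * ∫ x, |ψ x| :=
    mul_le_mul_of_nonneg_right (pow_le_one₀ hr.le hr1) hI1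
  linarith

open MeasureTheory in
/-- Bound for `H * ∑ φᵢ` from the homogeneity and subadditivity of the norm
`∫ |φ| + ∫ ‖D^d φ‖`. -/
lemma sobolev_sum_le (d N : ℕ) {K H : ℝ} (hH : 0 ≤ H)
    (φ : Fin N → EuclideanSpace ℝ (Fin d) → ℝ) (hφ : ∀ i, ContDiff ℝ (⊤ : ℕ∞) (φ i))
    (hc : ∀ i, HasCompactSupport (φ i))
    (hK : ∀ i, (∫ x, |φ i x|) + (∫ x, ‖iteratedFDeriv ℝ d (φ i) x‖) ≤ K) :
    (∫ x, |H * ∑ i, φ i x|) + (∫ x, ‖iteratedFDeriv ℝ d (fun x => H * ∑ i, φ i x) x‖)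
      ≤ H * (N * K) := by
  have hφd : ∀ i, ContDiff ℝ d (φ i) := fun i => (hφ i).of_le (by exact_mod_cast le_top)
  have i1 : ∀ i, Integrable fun x => |φ i x| := fun i =>
    ((hφ i).continuous.integrable_of_hasCompactSupport (hc i)).abs
  have i2 : ∀ i, Integrable fun x => ‖iteratedFDeriv ℝ d (φ i) x‖ := fun i =>
    (((hφd i).continuous_iteratedFDeriv le_rfl).integrable_of_hasCompactSupport
      ((hc i).iteratedFDeriv d)).norm
  have b1 : ∫ x, |H * ∑ i, φ i x| ≤ H * ∑ i, ∫ x, |φ i x| := by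
    rw [← integral_finsetSum _ fun i _ => i1 i, ← integral_const_mul]
    refine integral_mono_of_nonneg (.of_forall fun x => abs_nonneg _)
      ((integrable_finsetSum _ fun i _ => i1 i).const_mul H) (.of_forall fun x => ?_)
    simp only [abs_mul, abs_of_nonneg hH]
    exact mul_le_mul_of_nonneg_left (Finset.abs_sum_le_sum_abs _ _) hH
  have b2 : ∫ x, ‖iteratedFDeriv ℝ d (fun x => H * ∑ i, φ i x) x‖ ≤
      H * ∑ i, ∫ x, ‖iteratedFDeriv ℝ d (φ i) x‖ := by
    rw [← integral_finsetSum _ fun i _ => i2 i, ← integral_const_mul]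
    refine integral_mono_of_nonneg (.of_forall fun x => norm_nonneg _)
      ((integrable_finsetSum _ fun i _ => i2 i).const_mul H) (.of_forall fun x => ?_)
    have hs : ContDiff ℝ d fun x => ∑ i, φ i x := ContDiff.sum fun i _ => hφd i
    have := iteratedFDeriv_const_smul_apply' (a := H) (hs.contDiffAt (x := x))
    simp only [smul_eq_mul] at this
    simp only [this, norm_smul, Real.norm_of_nonneg hH]
    rw [iteratedFDeriv_fun_sum_apply fun i _ => (hφd i).contDiffAt]
    exact mul_le_mul_of_nonneg_left (norm_sum_le _ _) hH
  have b3 : ∑ i, ((∫ x, |φ i x|) + ∫ x, ‖iteratedFDeriv ℝ d (φ i) x‖) ≤ N * K := by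
    simpa using Finset.sum_le_sum fun i (_ : i ∈ Finset.univ) => hK i
  rw [Finset.sum_add_distrib] at b3
  have := mul_le_mul_of_nonneg_left b3 hH
  linarith

/-! ### The lower bound -/

/-- A nonzero polynomial is zero-free on some small cube centred in `(0, ρ)ᴺ`. -/
lemma exists_zero_free_cube {N : ℕ} {Q : MvPolynomial (Fin N) ℝ} (hQ : Q ≠ 0) {ρ : ℝ}
    (hρ : 0 < ρ) : ∃ s : Fin N → ℝ, (∀ i, s i ∈ Set.Ioo 0 ρ) ∧ ∃ δ > 0,
      ∀ t : Fin N → ℝ, (∀ i, |t i - s i| < δ) → eval t Q ≠ 0 := by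
  obtain ⟨s, hs, hs0⟩ : ∃ s ∈ Set.univ.pi fun _ : Fin N => Set.Ioo 0 ρ, eval s Q ≠ 0 := by
    by_contra! h
    exact hQ (MvPolynomial.funext_set _ (fun _ => Set.Ioo_infinite hρ) (by simpa using h))
  have hopen : IsOpen {t : Fin N → ℝ | eval t Q ≠ 0} :=
    isOpen_ne_fun (MvPolynomial.continuous_eval Q) continuous_const
  obtain ⟨δ, hδ, hball⟩ := Metric.isOpen_iff.1 hopen s hs0
  refine ⟨s, fun i => hs i trivial, δ, hδ, fun t ht => hball ?_⟩
  rw [Metric.mem_ball, dist_pi_lt_iff hδ]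
  exact ht

/-- **Theorem 2.** Lower bound for uniform approximation of the unit ball of
`W^d(L_1)` by ReLU networks on a bounded open domain `Ω ⊂ ℝ^d`: there is `C > 0` depending
only on `d` such that for every architecture `W` there is a smooth compactly supported `f`
with `‖f‖_{L_1} + ‖D^d f‖_{L_1} ≤ 1` and `sup_{x ∈ Ω} |f(x) - g(x)| ≥ C · P(W)⁻¹` for all
`g ∈ Υ^W(ℝ^d)`. -/
theorem sobolev_endpoint_approximation_lower_bound (d : ℕ) (hd : 0 < d) :
    ∃ C : ℝ, 0 < C ∧
      ∀ (Ω : Set (EuclideanSpace ℝ (Fin d))),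
        IsOpen Ω → Bornology.IsBounded Ω → Ω.Nonempty →
      ∀ (W : List ℕ), W ≠ [] → (∀ w ∈ W, 0 < w) →
      ∃ f : EuclideanSpace ℝ (Fin d) → ℝ, ContDiff ℝ (⊤ : ℕ∞) f ∧ HasCompactSupport f ∧
        (∫ x, |f x|) + (∫ x, ‖iteratedFDeriv ℝ d f x‖) ≤ 1 ∧
        ∀ g ∈ NNclass (fun t => max 0 t) d W,
          C * (numParams d W : ℝ)⁻¹ ≤ sSup ((fun x => |f x - g x|) '' Ω) := by
  obtain ⟨K, hK, hbump⟩ := exists_bumps d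
  refine ⟨1 / (9 * K), by positivity, fun Ω hΩ hΩb ⟨x₀, hx₀⟩ W hW _ => ?_⟩
  obtain ⟨ε, hε, hball⟩ := Metric.isOpen_iff.1 hΩ x₀ hx₀
  let e : EuclideanSpace ℝ (Fin d) := EuclideanSpace.single ⟨0, hd⟩ 1
  have he : ‖e‖ = 1 := by simp [e]
  have hdist : ∀ a b : ℝ, dist (x₀ + a • e) (x₀ + b • e) = |a - b| := fun a b => by
    rw [dist_add_left, dist_eq_norm, ← sub_smul, norm_smul, he, mul_one, Real.norm_eq_abs]
  have hmem : ∀ t : ℝ, |t| < ε → x₀ + t • e ∈ Ω := fun t ht => hball <| by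
    simpa [Metric.mem_ball] using (hdist t 0).trans_lt (by simpa using ht)
  obtain ⟨N, hN⟩ : ∃ N, N = numParams d W + 2 := ⟨_, rfl⟩
  obtain ⟨Q, hQ0, hQ⟩ := exists_crossing_obstruction d W hW hN x₀.ofLp e.ofLp
  have hP1 : (1 : ℝ) ≤ numParams d W := by
    have : 1 ≤ numParams d W := by unfold numParams; omega
    exact_mod_cast this
  obtain ⟨s, hs, δ, hδ, hfree⟩ := exists_zero_free_cube hQ0 (half_pos hε)
  -- A shift `τ` moving every centre `s i` off all the centres.
  obtain ⟨τ, hτ, hτs⟩ := (Set.Ioo_infinite (lt_min hδ (half_pos hε))).exists_notMem_finset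
    (Finset.univ.image fun q : Fin _ × Fin _ => s q.2 - s q.1)
  -- At radius `r` the points `x₀ + (s i + τ) • e` lie outside all the bumps. Bumps may overlap.
  obtain ⟨r, ⟨hr1, hrs⟩, hr0⟩ : ∃ r : ℝ, (r ≤ 1 ∧ ∀ i j, r ≤ |s i + τ - s j|) ∧ 0 < r := by
    have h1 : ∀ᶠ r : ℝ in 𝓝[>] 0, r ≤ 1 :=
      nhdsWithin_le_nhds (Iic_mem_nhds one_pos)
    have h2 : ∀ᶠ r : ℝ in 𝓝[>] 0, ∀ i j, r ≤ |s i + τ - s j| := by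
      refine Filter.eventually_all.2 fun i => Filter.eventually_all.2 fun j =>
        nhdsWithin_le_nhds (Iic_mem_nhds (abs_pos.2 fun h => hτs ?_))
      exact Finset.mem_image.2 ⟨(i, j), Finset.mem_univ _, by linarith⟩
    exact ((h1.and h2).and self_mem_nhdsWithin).exists
  choose φ hφs hφc hφ0 hφ1 hφr hφK using fun i => hbump (x₀ + s i • e) r hr0 hr1
  have hNpos : (0 : ℝ) < N := by rw [hN]; positivity
  set H : ℝ := 1 / (N * K) with hH
  have hHpos : 0 < H := by positivity
  have hfs : ContDiff ℝ (⊤ : ℕ∞) fun x => H * ∑ i, φ i x :=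
    contDiff_const.mul (ContDiff.sum fun i _ => hφs i)
  refine ⟨fun x => H * ∑ i, φ i x, hfs, ?_, ?_, fun g hg => ?_⟩
  · refine HasCompactSupport.mul_left (f := fun _ => H) ?_
    exact HasCompactSupport.intro (isCompact_iUnion fun i => (hφc i).isCompact) fun x hx =>
      Finset.sum_eq_zero fun i _ => image_eq_zero_of_notMem_tsupport fun h =>
        hx (Set.mem_iUnion.2 ⟨i, h⟩)
  · refine (sobolev_sum_le d N hHpos.le φ hφs hφc hφK).trans (le_of_eq ?_)
    rw [hH, one_div, inv_mul_cancel₀ (by positivity)]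
  by_contra! hlt
  have hgc := continuous_of_mem_NNclass (continuous_const.max continuous_id) hg
  have hcont : Continuous fun x : EuclideanSpace ℝ (Fin d) => |H * ∑ i, φ i x - g x| :=
    (hfs.continuous.sub (hgc.comp (PiLp.continuous_ofLp 2 _))).abs
  -- Without boundedness the real `sSup` would be the junk value `0`.
  have hbdd : BddAbove ((fun x : EuclideanSpace ℝ (Fin d) => |H * ∑ i, φ i x - g x|) '' Ω) :=
    (hΩb.isCompact_closure.bddAbove_image hcont.continuousOn).mono
      (Set.image_mono subset_closure)
  have hCH : 1 / (9 * K) * (numParams d W : ℝ)⁻¹ ≤ H / 3 := by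
    have hN3 : (N : ℝ) ≤ 3 * numParams d W := by
      rw [hN]
      push_cast
      linarith
    rw [hH, ← one_div, div_mul_div_comm, div_div, one_mul]
    refine one_div_le_one_div_of_le (by positivity) ?_
    nlinarith
  have hclose : ∀ t : ℝ, |t| < ε →
      |H * ∑ i, φ i (x₀ + t • e) - g (x₀.ofLp + t • e.ofLp)| < H / 3 := fun t ht =>
    ((le_csSup hbdd (Set.mem_image_of_mem _ (hmem t ht))).trans_lt hlt).trans_le hCH
  obtain ⟨t, ht, htQ⟩ := hQ g hg (H / 3) (2 * H / 3) (by linarith) (fun i => s i + τ) s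
    (fun i => by
      have h := hclose (s i + τ) (by
        have := (hs i).1; have := (hs i).2; have := hτ.1; have := hτ.2.trans_le (min_le_right _ _)
        rw [abs_lt]; constructor <;> linarith)
      rw [Finset.sum_eq_zero fun j _ => hφr j _ (by rw [hdist]; exact hrs i j)] at h
      have := (abs_lt.1 h).1
      linarith)
    (fun i => by
      have h := hclose (s i) (by
        have := (hs i).1; have := (hs i).2
        rw [abs_lt]; constructor <;> linarith)
      have h1 : 1 ≤ ∑ j, φ j (x₀ + s i • e) := by
        rw [← hφ1 i]
        exact Finset.single_le_sum (f := fun j => φ j (x₀ + s i • e))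
          (fun j _ => hφ0 j _) (Finset.mem_univ i)
      have := (abs_lt.1 h).2
      nlinarith)
  refine hfree t (fun i => ?_) htQ
  have h := ht i
  rw [Set.uIcc_of_ge (by linarith [hτ.1])] at h
  have := hτ.2.trans_le (min_le_left _ _)
  rw [abs_lt]
  constructor <;> linarith [h.1, h.2, hτ.1]
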